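/- arXiv:math/0007154 — 4 statements merged into one kernel-verified Lean document; each statement's English description precedes it below -/
import Mathlib

section
/- Let A be a finite-dimensional Hopf algebra over an algebraically closed field k of characteristic different from 2, let R be a triangular structure on A, and suppose the Drinfeld element u of (A,R) is central, grouplike, and satisfies u² = 1. Set R_u := (1/2)(1⊗1 + 1⊗u + u⊗1 − u⊗u) and R̃ := R·R_u. Then R̃ is a triangular structure on A and the Drinfeld element of (A,R̃) equals 1. -/
open TensorProduct

section Defs
variable (k A : Type*) [CommRing k] [Ring A] [HopfAlgebra k A]

/-- The map sending `R ∈ A⊗A` to `R₁₃ ∈ A⊗A⊗A`. -/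
noncomputable def R13map : A ⊗[k] A →ₗ[k] A ⊗[k] (A ⊗[k] A) :=
  TensorProduct.map LinearMap.id (TensorProduct.mk k A A 1)

/-- The map sending `R ∈ A⊗A` to `R₁₂ ∈ A⊗A⊗A`. -/
noncomputable def R12map : A ⊗[k] A →ₗ[k] A ⊗[k] (A ⊗[k] A) :=
  TensorProduct.map LinearMap.id ((TensorProduct.mk k A A).flip 1)

/-- `R` is a quasitriangular structure on the Hopf algebra `A`: `R` is invertible,
`(Δ⊗id)(R) = R₁₃R₂₃`, `(id⊗Δ)(R) = R₁₃R₁₂` and `τ(Δ(a))·R = R·Δ(a)` for all `a`. -/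
noncomputable def IsQuasitriangular (R : A ⊗[k] A) : Prop :=
  IsUnit R ∧
  (TensorProduct.assoc k A A A) ((LinearMap.rTensor A (Coalgebra.comul (R := k))) R)
      = R13map k A R * ((1 : A) ⊗ₜ R) ∧
  (LinearMap.lTensor A (Coalgebra.comul (R := k))) R = R13map k A R * R12map k A R ∧
  ∀ a : A, (TensorProduct.comm k A A) (Coalgebra.comul (R := k) a) * R
      = R * Coalgebra.comul (R := k) a

/-- `R` is a triangular structure on the Hopf algebra `A`: it is quasitriangular
and `R·τ(R) = 1⊗1`. -/
noncomputable def IsTriangular (R : A ⊗[k] A) : Prop :=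
  IsQuasitriangular k A R ∧ R * (TensorProduct.comm k A A) R = 1

/-- The Drinfeld element `u = μ∘(S⊗id)(τ(R))` of a quasitriangular Hopf algebra. -/
noncomputable def drinfeld (R : A ⊗[k] A) : A :=
  LinearMap.mul' k A
    ((TensorProduct.map (HopfAlgebra.antipode (R := k)) LinearMap.id)
      ((TensorProduct.comm k A A) R))

end Defs

/-- The element `R_u = ½(1⊗1 + 1⊗u + u⊗1 − u⊗u)`. -/
noncomputable def Ru (k A : Type*) [Field k] [Ring A] [HopfAlgebra k A]
    (u : A) : A ⊗[k] A :=
  (2 : k)⁻¹ • ((1 : A ⊗[k] A) + 1 ⊗ₜ u + u ⊗ₜ 1 - u ⊗ₜ u)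

/-!
The element `e = ½(1 - u)` is an idempotent with `u * e = -e`, and
`R_u = (1 - e) ⊗ 1 + e ⊗ u = 1 ⊗ (1 - e) + u ⊗ e`. Orthogonality of `e` and `1 - e` makes `R_u` an
involutive bicharacter, and an `R`-matrix may be multiplied by any central bicharacter. The Drinfeld
element of `R` is thereby multiplied by `(1 - e) + u * e = u`, hence becomes `u² = 1`.
-/

section TensorAlgebra

variable {k A B : Type*} [CommSemiring k] [Semiring A] [Semiring B]

theorem tensorComm_mul [Algebra k A] [Algebra k B] (x y : A ⊗[k] B) :
    TensorProduct.comm k A B (x * y) = TensorProduct.comm k A B x * TensorProduct.comm k A B y :=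
  map_mul (Algebra.TensorProduct.comm k A B) x y

theorem tmul_mem_center [Algebra k A] [Algebra k B] {a : A} {b : B}
    (ha : a ∈ Subalgebra.center k A) (hb : b ∈ Subalgebra.center k B) :
    a ⊗ₜ b ∈ Subalgebra.center k (A ⊗[k] B) := by
  rw [Subalgebra.mem_center_iff] at ha hb ⊢
  intro z
  induction z with
  | zero => simp
  | tmul x y => simp [ha, hb]
  | add y z hy hz => rw [add_mul, mul_add, hy, hz]

theorem lTensor_comul_mul [Algebra k A] [Bialgebra k B] (x y : A ⊗[k] B) :
    (Coalgebra.comul (R := k)).lTensor A (x * y) =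
      (Coalgebra.comul (R := k)).lTensor A x * (Coalgebra.comul (R := k)).lTensor A y :=
  map_mul (Algebra.TensorProduct.map (AlgHom.id k A) (Bialgebra.comulAlgHom k B)) x y

theorem assoc_rTensor_comul_mul [Bialgebra k A] [Algebra k B] (x y : A ⊗[k] B) :
    TensorProduct.assoc k A A B ((Coalgebra.comul (R := k)).rTensor B (x * y)) =
      TensorProduct.assoc k A A B ((Coalgebra.comul (R := k)).rTensor B x) *
        TensorProduct.assoc k A A B ((Coalgebra.comul (R := k)).rTensor B y) :=
  map_mul ((Algebra.TensorProduct.assoc k k k A A B).toAlgHom.comp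
    (Algebra.TensorProduct.map (Bialgebra.comulAlgHom k A) (AlgHom.id k B))) x y

end TensorAlgebra

section Bicharacter

variable {k A : Type*} [CommRing k] [Ring A] [HopfAlgebra k A]

theorem R13map_mul (x y : A ⊗[k] A) : R13map k A (x * y) = R13map k A x * R13map k A y :=
  map_mul (Algebra.TensorProduct.map (AlgHom.id k A)
    (Algebra.TensorProduct.includeRight : A →ₐ[k] A ⊗[k] A)) x y

theorem R12map_mul (x y : A ⊗[k] A) : R12map k A (x * y) = R12map k A x * R12map k A y :=
  map_mul (Algebra.TensorProduct.map (AlgHom.id k A)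
    (Algebra.TensorProduct.includeLeft : A →ₐ[k] A ⊗[k] A)) x y

@[simp]
theorem R13map_tmul (a b : A) : R13map k A (a ⊗ₜ b) = a ⊗ₜ (1 ⊗ₜ b) := rfl

@[simp]
theorem R12map_tmul (a b : A) : R12map k A (a ⊗ₜ b) = a ⊗ₜ (b ⊗ₜ 1) := rfl

theorem commute_R13map_one_tmul_tmul_one (F : A ⊗[k] A) (b : A) :
    Commute (R13map k A F) (1 ⊗ₜ (b ⊗ₜ 1)) := by
  induction F with
  | zero => simp
  | tmul x y => simp [commute_iff_eq]
  | add F G hF hG => simpa only [map_add] using hF.add_left hG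

theorem R13map_mem_center {F : A ⊗[k] A} (hF : F ∈ Subalgebra.center k (A ⊗[k] A)) :
    R13map k A F ∈ Subalgebra.center k (A ⊗[k] (A ⊗[k] A)) := by
  have commute_tmul (a b c : A) : Commute (R13map k A F) (a ⊗ₜ (b ⊗ₜ c)) := by
    have factor : a ⊗ₜ[k] (b ⊗ₜ[k] c) = R13map k A (a ⊗ₜ c) * (1 ⊗ₜ (b ⊗ₜ 1)) := by simp
    have commute_R13map : Commute (R13map k A F) (R13map k A (a ⊗ₜ c)) := by
      rw [commute_iff_eq, ← R13map_mul, ← R13map_mul, Subalgebra.mem_center_iff.1 hF]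
    exact factor ▸ commute_R13map.mul_right (commute_R13map_one_tmul_tmul_one F b)
  refine Subalgebra.mem_center_iff.2 fun z => Commute.symm ?_
  induction z with
  | zero => exact .zero_right _
  | tmul a y =>
    induction y with
    | zero => simp
    | tmul b c => exact commute_tmul a b c
    | add y z hy hz => simpa only [TensorProduct.tmul_add] using hy.add_right hz
  | add y z hy hz => exact hy.add_right hz

/-- The two hexagon axioms `(Δ⊗id)(F) = F₁₃F₂₃` and `(id⊗Δ)(F) = F₁₃F₁₂` of a quasitriangular
structure, without invertibility or the intertwining of `Δ` and `τ ∘ Δ`. -/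
structure IsBicharacter (F : A ⊗[k] A) : Prop where
  comul_left : TensorProduct.assoc k A A A ((Coalgebra.comul (R := k)).rTensor A F) =
    R13map k A F * ((1 : A) ⊗ₜ F)
  comul_right : (Coalgebra.comul (R := k)).lTensor A F = R13map k A F * R12map k A F

theorem IsBicharacter.mul {R F : A ⊗[k] A} (hR : IsBicharacter R) (hF : IsBicharacter F)
    (hcent : F ∈ Subalgebra.center k (A ⊗[k] A)) : IsBicharacter (R * F) := by
  have commute (z : A ⊗[k] (A ⊗[k] A)) : Commute z (R13map k A F) :=
    Subalgebra.mem_center_iff.1 (R13map_mem_center hcent) z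
  constructor
  · have one_tmul_mul : (1 : A) ⊗ₜ[k] (R * F) = (1 ⊗ₜ R) * (1 ⊗ₜ F) := by simp
    rw [assoc_rTensor_comul_mul, hR.comul_left, hF.comul_left, R13map_mul, one_tmul_mul,
      (commute _).mul_mul_mul_comm]
  · rw [lTensor_comul_mul, hR.comul_right, hF.comul_right, R13map_mul, R12map_mul,
      (commute _).mul_mul_mul_comm]

theorem IsQuasitriangular.mul {R F : A ⊗[k] A} (hR : IsQuasitriangular k A R)
    (hunit : IsUnit F) (hF : IsBicharacter F) (hcent : F ∈ Subalgebra.center k (A ⊗[k] A)) :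
    IsQuasitriangular k A (R * F) := by
  obtain ⟨R_unit, R_left, R_right, R_intertwines⟩ := hR
  obtain ⟨left, right⟩ := IsBicharacter.mul ⟨R_left, R_right⟩ hF hcent
  refine ⟨R_unit.mul hunit, left, right, fun a => ?_⟩
  rw [← mul_assoc, R_intertwines, mul_assoc, mul_assoc, Subalgebra.mem_center_iff.1 hcent]

theorem IsTriangular.mul {R F : A ⊗[k] A} (hR : IsTriangular k A R) (hF : IsBicharacter F)
    (hcent : F ∈ Subalgebra.center k (A ⊗[k] A)) (hinv : F * TensorProduct.comm k A A F = 1) :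
    IsTriangular k A (R * F) := by
  have central := Subalgebra.mem_center_iff.1 hcent
  have F_unit : IsUnit F := isUnit_iff_exists.2 ⟨_, hinv, (central _).trans hinv⟩
  refine ⟨hR.1.mul F_unit hF hcent, ?_⟩
  rw [tensorComm_mul, mul_assoc, ← central, mul_assoc, central, hinv, mul_one, hR.2]

theorem drinfeld_add (R T : A ⊗[k] A) :
    drinfeld k A (R + T) = drinfeld k A R + drinfeld k A T := by
  simp [drinfeld]

theorem drinfeld_mul_tmul (R : A ⊗[k] A) (x y : A) :
    drinfeld k A (R * x ⊗ₜ y) = HopfAlgebra.antipode k y * drinfeld k A R * x := by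
  induction R with
  | zero => simp [drinfeld]
  | tmul a b => simp [drinfeld, HopfAlgebra.antipode_mul_antidistrib, mul_assoc]
  | add R T hR hT => simp only [drinfeld_add, add_mul, mul_add, hR, hT]

end Bicharacter

section GroupLike

theorem isGroupLikeElem_of_comul_eq_tmul_self {k C : Type*} [CommRing k] [IsDomain k]
    [AddCommGroup C] [Module k C] [Module.IsTorsionFree k C] [Coalgebra k C] {u : C}
    (hne : u ≠ 0) (hu : Coalgebra.comul (R := k) u = u ⊗ₜ u) : IsGroupLikeElem k u := by
  have counit_smul : Coalgebra.counit (R := k) u • u = u := by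
    simpa [hu] using congrArg (TensorProduct.lid k C) (Coalgebra.rTensor_counit_comul (R := k) u)
  exact ⟨smul_left_injective k hne (by simpa using counit_smul), hu⟩

theorem antipode_eq_self_of_mul_self_eq_one {k A : Type*} [CommSemiring k] [Semiring A]
    [HopfAlgebra k A] {u : A} (hu : IsGroupLikeElem k u) (husq : u * u = 1) :
    HopfAlgebra.antipode k u = u :=
  left_inv_eq_right_inv hu.antipode_mul_cancel husq

end GroupLike

section NegProj

variable {k A : Type*} [Field k] [Ring A] [Algebra k A]

variable (k) in
/-- The element `½(1 - u)`, which for an involution `u` is the projection onto its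
`(-1)`-eigenspace. -/
noncomputable def negProj (u : A) : A := (2 : k)⁻¹ • (1 - u)

theorem mul_negProj {u : A} (husq : u * u = 1) : u * negProj k u = -negProj k u := by
  rw [negProj, mul_smul_comm, mul_sub, husq, mul_one, ← smul_neg, neg_sub]

theorem one_sub_negProj_sub_negProj (h2 : (2 : k) ≠ 0) (u : A) :
    1 - negProj k u - negProj k u = u := by
  rw [negProj, sub_sub, ← two_smul k, smul_inv_smul₀ h2, sub_sub_cancel]

theorem isIdempotentElem_negProj (h2 : (2 : k) ≠ 0) {u : A} (husq : u * u = 1) :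
    IsIdempotentElem (negProj k u) :=
  calc negProj k u * negProj k u
    _ = (2 : k)⁻¹ • ((1 - u) * negProj k u) := smul_mul_assoc _ _ _
    _ = (2 : k)⁻¹ • (2 : k) • negProj k u := by
      rw [sub_mul, one_mul, mul_negProj husq, sub_neg_eq_add, two_smul]
    _ = negProj k u := inv_smul_smul₀ h2 _

end NegProj

section Ru

variable {k A : Type*} [Field k] [Ring A] [HopfAlgebra k A] {u : A}

theorem Ru_eq_one_sub_tmul_one_add_tmul (h2 : (2 : k) ≠ 0) (u : A) :
    Ru k A u = (1 - negProj k u) ⊗ₜ 1 + negProj k u ⊗ₜ u := by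
  rw [Ru, inv_smul_eq_iff₀ h2]
  simp only [negProj, TensorProduct.sub_tmul, ← TensorProduct.smul_tmul', smul_add, smul_sub,
    smul_inv_smul₀ h2, Algebra.TensorProduct.one_def]
  module

theorem comm_Ru : TensorProduct.comm k A A (Ru k A u) = Ru k A u := by
  simp only [Ru, map_smul, map_sub, map_add, TensorProduct.comm_tmul,
    Algebra.TensorProduct.one_def, add_right_comm]

theorem Ru_eq_one_tmul_one_sub_add_tmul (h2 : (2 : k) ≠ 0) (u : A) :
    Ru k A u = 1 ⊗ₜ (1 - negProj k u) + u ⊗ₜ negProj k u := by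
  rw [← comm_Ru, Ru_eq_one_sub_tmul_one_add_tmul h2, map_add, TensorProduct.comm_tmul,
    TensorProduct.comm_tmul]

theorem Ru_mem_center (hcent : u ∈ Subalgebra.center k A) :
    Ru k A u ∈ Subalgebra.center k (A ⊗[k] A) :=
  have one_central : (1 : A) ∈ Subalgebra.center k A := one_mem _
  Subalgebra.smul_mem _ (sub_mem (add_mem (add_mem (one_mem _)
    (tmul_mem_center one_central hcent)) (tmul_mem_center hcent one_central))
    (tmul_mem_center hcent hcent)) _

theorem Ru_mul_self (h2 : (2 : k) ≠ 0) (husq : u * u = 1) : Ru k A u * Ru k A u = 1 := by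
  have e_idem := isIdempotentElem_negProj h2 husq
  rw [Ru_eq_one_sub_tmul_one_add_tmul h2]
  simp only [add_mul, mul_add, Algebra.TensorProduct.tmul_mul_tmul, e_idem.eq, e_idem.one_sub.eq,
    e_idem.mul_one_sub_self, e_idem.one_sub_mul_self, TensorProduct.zero_tmul, mul_one, husq,
    add_zero, zero_add]
  rw [← TensorProduct.add_tmul, sub_add_cancel, Algebra.TensorProduct.one_def]

theorem isBicharacter_Ru (h2 : (2 : k) ≠ 0) (hu : IsGroupLikeElem k u) (husq : u * u = 1) :
    IsBicharacter (Ru k A u) := by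
  have e_idem := isIdempotentElem_negProj h2 husq
  constructor
  · rw [Ru_eq_one_tmul_one_sub_add_tmul h2]
    simp [add_mul, mul_add, TensorProduct.tmul_add,
      hu.comul_eq_tmul_self, e_idem.eq, e_idem.one_sub.eq, e_idem.mul_one_sub_self,
      e_idem.one_sub_mul_self, Algebra.TensorProduct.one_def]
  · rw [Ru_eq_one_sub_tmul_one_add_tmul h2]
    simp [add_mul, mul_add, hu.comul_eq_tmul_self, e_idem.eq, e_idem.one_sub.eq,
      e_idem.mul_one_sub_self, e_idem.one_sub_mul_self, Algebra.TensorProduct.one_def]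

theorem IsTriangular.mul_Ru (h2 : (2 : k) ≠ 0) {R : A ⊗[k] A} (hR : IsTriangular k A R)
    (hcent : u ∈ Subalgebra.center k A) (hu : IsGroupLikeElem k u) (husq : u * u = 1) :
    IsTriangular k A (R * Ru k A u) :=
  hR.mul (isBicharacter_Ru h2 hu husq) (Ru_mem_center hcent)
    (by rw [comm_Ru, Ru_mul_self h2 husq])

theorem drinfeld_mul_Ru (h2 : (2 : k) ≠ 0) (R : A ⊗[k] A) (hcent : u ∈ Subalgebra.center k A)
    (hu : IsGroupLikeElem k u) (husq : u * u = 1) :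
    drinfeld k A (R * Ru k A u) = drinfeld k A R * u := by
  set e := negProj k u
  calc drinfeld k A (R * Ru k A u)
    _ = drinfeld k A R * (1 - e) + u * drinfeld k A R * e := by
      rw [Ru_eq_one_sub_tmul_one_add_tmul h2, mul_add, drinfeld_add, drinfeld_mul_tmul,
        drinfeld_mul_tmul, antipode_eq_self_of_mul_self_eq_one hu husq, HopfAlgebra.antipode_one,
        one_mul]
    _ = drinfeld k A R * (1 - e + u * e) := by
      rw [← Subalgebra.mem_center_iff.1 hcent, mul_assoc, ← mul_add]
    _ = drinfeld k A R * u := by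
      rw [mul_negProj husq, ← sub_eq_add_neg, one_sub_negProj_sub_negProj h2]

end Ru

theorem mul_Ru_isTriangular_drinfeld_eq_one_general
    (k A : Type*) [Field k] [Ring A] [HopfAlgebra k A] (h2 : (2 : k) ≠ 0)
    (R : A ⊗[k] A) (hR : IsTriangular k A R)
    (hcent : ∀ a : A, drinfeld k A R * a = a * drinfeld k A R)
    (hgl : IsGroupLikeElem k (drinfeld k A R))
    (husq : drinfeld k A R * drinfeld k A R = 1) :
    IsTriangular k A (R * Ru k A (drinfeld k A R)) ∧
    drinfeld k A (R * Ru k A (drinfeld k A R)) = 1 := by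
  have u_central : drinfeld k A R ∈ Subalgebra.center k A :=
    Subalgebra.mem_center_iff.2 fun a => (hcent a).symm
  exact ⟨hR.mul_Ru h2 u_central hgl husq, (drinfeld_mul_Ru h2 R u_central hgl husq).trans husq⟩

/-- Lemma 2.1.3: if `(A,R)` is triangular over an algebraically closed
field of characteristic `≠ 2` and its Drinfeld element `u` is central, grouplike and satisfies
`u² = 1`, then `R̃ = R·R_u` is again a triangular structure, with Drinfeld element `1`. -/
theorem mul_Ru_isTriangular_drinfeld_eq_one
    (k A : Type*) [Field k] [IsAlgClosed k] [Ring A] [HopfAlgebra k A]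
    [FiniteDimensional k A] (h2 : (2 : k) ≠ 0)
    (R : A ⊗[k] A) (hR : IsTriangular k A R)
    (hcent : ∀ a : A, drinfeld k A R * a = a * drinfeld k A R)
    (hne : drinfeld k A R ≠ 0)
    (hgl : Coalgebra.comul (R := k) (drinfeld k A R) = drinfeld k A R ⊗ₜ drinfeld k A R)
    (husq : drinfeld k A R * drinfeld k A R = 1) :
    IsTriangular k A (R * Ru k A (drinfeld k A R)) ∧
    drinfeld k A (R * Ru k A (drinfeld k A R)) = 1 :=
  mul_Ru_isTriangular_drinfeld_eq_one_general k A h2 R hR hcent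
    (isGroupLikeElem_of_comul_eq_tmul_self hne hgl) husq
end

section
/- Let k be a field, A a finite-dimensional associative unital k-algebra, and B ⊆ A a unital subalgebra. Then every simple B-module X is a constituent of some simple A-module: there exist a simple A-module V and B-submodules N ⊆ M ⊆ V (for the restricted B-action) such that M/N is isomorphic to X as a B-module. -/
universe u v

/-!
Fix `x ≠ 0` in `X`, so that `X = B x`. By Zorn's lemma there is a left ideal `N` of `A` maximal
among those with `N ∩ B ⊆ Ann_B(x)`; as `A` is Artinian, some left ideal `U` covers `N`. By
maximality `U` contains some `b ∈ B` with `b x ≠ 0`, so `U ∩ B → X`, `b ↦ b x`, is surjective, and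
as it kills `N ∩ B` it exhibits `X` as a constituent of the simple `A`-module `U / N`.
-/

/-- The `R`-module `X` is a subquotient of `W`: it is isomorphic to `M ⧸ N` for submodules
`N ≤ M` of `W`. For simple `X` this says that `X` is a constituent of `W`. -/
def IsSubquotient (R W X : Type*) [Ring R] [AddCommGroup W] [Module R W] [AddCommGroup X]
    [Module R X] : Prop :=
  ∃ M N : Submodule R W, N ≤ M ∧ Nonempty ((M ⧸ N.comap M.subtype) ≃ₗ[R] X)

namespace IsSubquotient

variable {R W X : Type*} [Ring R] [AddCommGroup W] [Module R W] [AddCommGroup X] [Module R X]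

theorem of_ker_le_ker {Y : Type*} [AddCommGroup Y] [Module R Y] (g : Y →ₗ[R] W)
    (f : Y →ₗ[R] X) (hf : Function.Surjective f) (hgf : LinearMap.ker g ≤ LinearMap.ker f) :
    IsSubquotient R W X := by
  let K := (LinearMap.ker f).map g
  let q := (K.comap (LinearMap.range g).subtype).mkQ ∘ₗ g.rangeRestrict
  have hq : Function.Surjective q := (Submodule.mkQ_surjective _).comp g.surjective_rangeRestrict
  have ker_q : LinearMap.ker q = LinearMap.ker f := by
    rw [LinearMap.ker_comp, Submodule.ker_mkQ, ← Submodule.comap_comp,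
      LinearMap.subtype_comp_codRestrict, Submodule.comap_map_eq, sup_eq_left.mpr hgf]
  exact ⟨LinearMap.range g, K, LinearMap.map_le_range, ⟨(q.quotKerEquivOfSurjective hq).symm ≪≫ₗ
    Submodule.quotEquivOfEq _ _ ker_q ≪≫ₗ f.quotKerEquivOfSurjective hf⟩⟩

theorem of_injective_of_isSimpleModule [IsSimpleModule R X] (g : R →ₗ[R] W)
    (hg : Function.Injective g) : IsSubquotient R W X := by
  have := IsSimpleModule.nontrivial R X
  obtain ⟨x, hx⟩ := exists_ne (0 : X)
  refine .of_ker_le_ker g (LinearMap.toSpanSingleton R X x)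
    (IsSimpleModule.toSpanSingleton_surjective R hx) ?_
  rw [LinearMap.ker_eq_bot.mpr hg]
  exact bot_le

end IsSubquotient

section ScalarTower

variable {A B W : Type*} [Ring A] [Ring B] [SMul B A] [AddCommGroup W] [Module A W] [Module B W]
  [IsScalarTower B A W]

variable (A) in
theorem exists_maximal_comap_restrictScalars_le {Y : Type*} [AddCommGroup Y] [Module B Y]
    {g : Y →ₗ[B] W} {K : Submodule B Y} (hK : LinearMap.ker g ≤ K) :
    ∃ N : Submodule A W, Maximal (fun N ↦ (N.restrictScalars B).comap g ≤ K) N := by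
  have chain_bound (c : Set (Submodule A W)) (hcK : ∀ P ∈ c, (P.restrictScalars B).comap g ≤ K)
      (hc : IsChain (· ≤ ·) c) (hne : c.Nonempty) :
      ((sSup c).restrictScalars B).comap g ≤ K := fun y hy ↦ by
    obtain ⟨P, hPc, hyP⟩ := (Submodule.mem_sSup_of_directed hne hc.directedOn).mp hy
    exact hcK P hPc hyP
  obtain ⟨N, -, hN⟩ := zorn_le_nonempty₀ {N : Submodule A W | (N.restrictScalars B).comap g ≤ K}
    (fun c hcK hc N hN ↦ ⟨sSup c, chain_bound c hcK hc ⟨N, hN⟩, fun _ ↦ le_sSup⟩) ⊥ hK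
  exact ⟨N, hN⟩

theorem IsSubquotient.exists_covBy_isSubquotient [IsStronglyAtomic (Submodule A W)] {X : Type*}
    [AddCommGroup X] [Module B X] [IsSimpleModule B X] (h : IsSubquotient B W X) :
    ∃ N U : Submodule A W, N ⋖ U ∧ IsSubquotient B (U ⧸ N.submoduleOf U) X := by
  obtain ⟨S, T, -, ⟨e⟩⟩ := h
  let f : S →ₗ[B] X := e.toLinearMap ∘ₗ (T.comap S.subtype).mkQ
  have hf : Function.Surjective f := e.surjective.comp (Submodule.mkQ_surjective _)
  obtain ⟨N, hN⟩ := exists_maximal_comap_restrictScalars_le A (g := S.subtype)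
    (K := LinearMap.ker f) (by simp)
  have hN_top : N ≠ ⊤ := by
    rintro rfl
    exact (LinearMap.isCoatom_ker_of_surjective hf).1 (top_le_iff.mp hN.prop)
  obtain ⟨U, hNU, -⟩ := exists_covBy_le_of_lt hN_top.lt_top
  let S' := (U.restrictScalars B).comap S.subtype
  let g : S' →ₗ[B] U ⧸ N.submoduleOf U :=
    (N.submoduleOf U).mkQ.restrictScalars B ∘ₗ
      S.subtype.restrict (q := U.restrictScalars B) fun _ hs ↦ hs
  have hfS' : f.domRestrict S' ≠ 0 := fun h0 ↦
    hN.not_prop_of_gt hNU.lt fun s hs ↦ LinearMap.congr_fun h0 ⟨s, hs⟩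
  refine ⟨N, U, hNU, .of_ker_le_ker g (f.domRestrict S')
    (LinearMap.surjective_of_ne_zero hfS') fun s hs ↦ ?_⟩
  exact hN.prop ((Submodule.Quotient.mk_eq_zero (N.submoduleOf U)).mp hs)

end ScalarTower

/-- Strong atomicity of the lattice of left ideals says that `A` is left semi-Artinian: every
nonzero left `A`-module has a simple submodule. -/
theorem simple_submodule_constituent_of_simple_general
    (A : Type u) [Ring A] [IsStronglyAtomic (Submodule A A)] (B : Subring A)
    (X : Type v) [AddCommGroup X] [Module B X] [IsSimpleModule B X] :
    ∃ V : ModuleCat.{u} A, IsSimpleModule A V ∧ IsSubquotient B V X := by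
  have hA : IsSubquotient B A X := .of_injective_of_isSimpleModule
    (LinearMap.toSpanSingleton B A 1) ((faithfulSMul_iff_injective_smul_one B A).mp inferInstance)
  obtain ⟨N, U, hNU, hX⟩ := hA.exists_covBy_isSubquotient (A := A)
  exact ⟨.of A (U ⧸ N.submoduleOf U), (covBy_iff_quot_is_simple hNU.le).mp hNU, hX⟩

/-- Lemma 7.3.7: if `B ⊆ A` are finite-dimensional unital algebras over a
field `k`, then any simple `B`-module is a constituent (a composition factor) of some simple
`A`-module, restricted to `B`. -/
theorem simple_submodule_constituent_of_simple
    (k : Type*) [Field k] (A : Type u) [Ring A] [Algebra k A] [FiniteDimensional k A]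
    (B : Subalgebra k A)
    (X : Type v) [AddCommGroup X] [Module B X] (hX : IsSimpleModule B X) :
    ∃ V : ModuleCat.{u} A, IsSimpleModule A V ∧
      ∃ (M N : Submodule B V), N ≤ M ∧
        Nonempty ((↥M ⧸ (N.comap M.subtype)) ≃ₗ[B] X) := by
  have : IsArtinianRing A := .of_finite k A
  exact simple_submodule_constituent_of_simple_general A B.toSubring X
end

section
/- Let A be a finite-dimensional Hopf algebra over ℂ with comultiplication Δ, counit ε and antipode S. Then the following are equivalent: (1) for any two simple A-modules V and W, the A-module V⊗W (with action a·(v⊗w) = Σ a₍₁₎v ⊗ a₍₂₎w, where Δ(a) = Σ a₍₁₎⊗a₍₂₎) is semisimple; (2) the Jacobson radical Rad(A) of A is a Hopf ideal, i.e. ε(Rad(A)) = 0, Δ(Rad(A)) ⊆ Rad(A)⊗A + A⊗Rad(A), and S(Rad(A)) ⊆ Rad(A). -/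
open TensorProduct

/-- The Jacobson radical of a ring (the intersection of its maximal left ideals; equivalently,
the intersection of the annihilators of all simple modules). -/
noncomputable def rad (A : Type*) [Ring A] : Ideal A := (⊥ : Ideal A).jacobson

/-- The ring homomorphism `A → End(V ⊗ W)` giving the `A`-module structure on the tensor
product of two `A`-modules over a bialgebra `A`: `a·(v⊗w) = Σ a₍₁₎v ⊗ a₍₂₎w`. -/
noncomputable def tensorRepRingHom (A : Type*) [Ring A] [HopfAlgebra ℂ A]
    (V W : Type*)
    [AddCommGroup V] [Module ℂ V] [Module A V] [IsScalarTower ℂ A V] [SMulCommClass ℂ A V]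
    [AddCommGroup W] [Module ℂ W] [Module A W] [IsScalarTower ℂ A W] [SMulCommClass ℂ A W] :
    A →+* Module.End ℂ (V ⊗[ℂ] W) :=
  ((Module.endTensorEndAlgHom (R := ℂ) (S := ℂ) (A := ℂ) (M := V) (N := W)).comp
    ((Algebra.TensorProduct.map
        (Algebra.lsmul ℂ ℂ V : A →ₐ[ℂ] Module.End ℂ V)
        (Algebra.lsmul ℂ ℂ W : A →ₐ[ℂ] Module.End ℂ W)).comp
      (Bialgebra.comulAlgHom ℂ A))).toRingHom

/-- The `A`-module structure on `V ⊗ W` induced by the comultiplication. -/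
noncomputable def tensorRepModule (A : Type*) [Ring A] [HopfAlgebra ℂ A]
    (V W : Type*)
    [AddCommGroup V] [Module ℂ V] [Module A V] [IsScalarTower ℂ A V] [SMulCommClass ℂ A V]
    [AddCommGroup W] [Module ℂ W] [Module A W] [IsScalarTower ℂ A W] [SMulCommClass ℂ A W] :
    Module A (V ⊗[ℂ] W) :=
  Module.compHom _ (tensorRepRingHom A V W)

/-!
Let `J` be the Jacobson radical of `A`. A module is semisimple iff `J` kills it, so `V ⊗ W` is
semisimple iff `Δ(J)` acts on it as zero. If this holds for all simple `V` and `W`, it holds for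
all semisimple ones, in particular for `V = W = A ⧸ J`, and letting `Δ(a)` act on `1 ⊗ 1` there
recovers its class in `A ⧸ J ⊗ A ⧸ J`. So the Chevalley property says exactly that `Δ(J)` vanishes
in `A ⧸ J ⊗ A ⧸ J`; as `ε(J) = 0` always, this means that `J` is a coideal.

Stability under the antipode is then automatic: the linear endomorphisms preserving a two-sided
ideal that is also a coideal form a subalgebra of the convolution algebra. By
finiteness, an element of it that is invertible in the convolution algebra has its inverse in it;
apply this to the identity map, whose convolution inverse is the antipode.
-/

universe v w

section ConvolutionAlgebra

theorem mem_subalgebra_of_mul_eq_one {k E : Type*} [CommSemiring k] [Semiring E] [Algebra k E]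
    (B : Subalgebra k E) [IsArtinian k B] {x y : E} (hx : x ∈ B) (hxy : x * y = 1) : y ∈ B := by
  have hinj : Function.Injective (LinearMap.mulRight k (⟨x, hx⟩ : B)) := fun b c hbc ↦ by
    have hbc : (b : E) * x = c * x := congrArg Subtype.val hbc
    ext
    rw [← mul_one (b : E), ← mul_one (c : E), ← hxy, ← mul_assoc, hbc, mul_assoc]
  obtain ⟨b, hb⟩ := IsArtinian.surjective_of_injective_endomorphism _ hinj 1
  have hb : (b : E) * x = 1 := congrArg Subtype.val hb
  exact left_inv_eq_right_inv hb hxy ▸ b.2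

/-- The subalgebra of the convolution algebra `Hom(C, A)` consisting of the linear maps that send
the coideal `J` of `C` into the two-sided ideal `I` of `A`. -/
def convStabilizer {k C A : Type*} [CommRing k] [AddCommGroup C] [Module k C] [Coalgebra k C]
    [Ring A] [Algebra k A] (J : Submodule k C) [J.IsCoideal] (I : Ideal A) [I.IsTwoSided] :
    Subalgebra k (WithConv (C →ₗ[k] A)) where
  carrier := {f | ∀ c ∈ J, f c ∈ I}
  add_mem' hf hg c hc := I.add_mem (hf c hc) (hg c hc)
  algebraMap_mem' r c hc := by simp [Submodule.IsCoideal.counit_eq_zero hc]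
  mul_mem' {f g} hf hg c hc := by
    let q := (Ideal.Quotient.mkₐ k I).toLinearMap
    have hq (h : WithConv (C →ₗ[k] A)) (hh : ∀ c ∈ J, h c ∈ I) :
        J ≤ LinearMap.ker (q ∘ₗ h.ofConv) :=
      fun c hc ↦ Ideal.Quotient.eq_zero_iff_mem.2 (hh c hc)
    have factor : q ∘ₗ LinearMap.mul' k A ∘ₗ TensorProduct.map f.ofConv g.ofConv =
        LinearMap.mul' k (A ⧸ I) ∘ₗ
          TensorProduct.map (J.liftQ _ (hq f hf)) (J.liftQ _ (hq g hg)) ∘ₗ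
          TensorProduct.map J.mkQ J.mkQ :=
      TensorProduct.ext' fun _ _ ↦ rfl
    refine Ideal.Quotient.eq_zero_iff_mem.1
      ((LinearMap.congr_fun factor (Coalgebra.comul c)).trans ?_)
    simp only [LinearMap.comp_apply, Submodule.IsCoideal.map_mkQ_comul_eq_zero hc, map_zero]

theorem isHopfIdeal_of_isCoideal {k A : Type*} [CommRing k] [IsArtinianRing k] [Ring A]
    [HopfAlgebra k A] [Module.Finite k A] (I : Ideal A) [I.IsTwoSided]
    [(I.restrictScalars k).IsCoideal] : I.IsHopfIdeal k := by
  have : Module.Finite k (WithConv (A →ₗ[k] A)) :=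
    .equiv (WithConv.linearEquiv k (A →ₗ[k] A)).symm
  let B : Subalgebra k (WithConv (A →ₗ[k] A)) := convStabilizer (I.restrictScalars k) I
  have : IsArtinian k B := inferInstanceAs (IsArtinian k B.toSubmodule)
  have id_mem : WithConv.toConv LinearMap.id ∈ B := fun _ ha ↦ ha
  exact ⟨mem_subalgebra_of_mul_eq_one B id_mem LinearMap.id_mul_antipode⟩

end ConvolutionAlgebra

section Semisimple

variable {R M : Type*} [Ring R] [AddCommGroup M] [Module R M]

theorem isSemisimpleModule_iff_jacobson_smul_eq_zero [IsSemiprimaryRing R] :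
    IsSemisimpleModule R M ↔ ∀ a ∈ Ring.jacobson R, ∀ m : M, a • m = 0 := by
  refine ⟨fun _ a ha ↦
    Module.mem_annihilator.1 (IsSemisimpleModule.jacobson_le_annihilator R M ha), fun h ↦ ?_⟩
  have torsion : Module.IsTorsionBySet R M (Ring.jacobson R) := fun m a ↦ h a a.2 m
  exact torsion.isSemisimpleModule_iff.1 inferInstance

theorem isSemisimpleModule_quotient_jacobson [IsSemiprimaryRing R] :
    IsSemisimpleModule R (R ⧸ Ring.jacobson R) := by
  refine isSemisimpleModule_iff_jacobson_smul_eq_zero.2 fun a ha m ↦ ?_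
  obtain ⟨b, rfl⟩ := Submodule.mkQ_surjective _ m
  exact (Submodule.Quotient.mk_eq_zero _).2 (Ideal.mul_mem_right b _ ha)

theorem isSemisimpleModule_induction [IsSemisimpleModule R M] {p : M → Prop}
    (simple : ∀ N : Submodule R M, IsSimpleModule R N → ∀ x ∈ N, p x)
    (zero : p 0) (add : ∀ x y, p x → p y → p (x + y)) (x : M) : p x := by
  have hx : x ∈ ⨆ N : {N : Submodule R M | IsSimpleModule R N}, (N : Submodule R M) := by
    rw [← sSup_eq_iSup', IsSemisimpleModule.sSup_simples_eq_top]
    trivial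
  exact Submodule.iSup_induction _ (motive := p) hx (fun N ↦ simple N N.2) zero add

end Semisimple

section TensorAction

variable (k : Type*) {A B : Type*} [CommRing k] [Ring A] [Algebra k A] [Ring B] [Algebra k B]
  (V : Type*) [AddCommGroup V] [Module k V] [Module A V] [IsScalarTower k A V]
  (W : Type*) [AddCommGroup W] [Module k W] [Module B W] [IsScalarTower k B W]

/-- The action of `A ⊗ B` on the tensor product of an `A`-module `V` and a `B`-module `W`, given by
`(a ⊗ b) · (v ⊗ w) = a v ⊗ b w`. -/
noncomputable def tensorAction : A ⊗[k] B →ₐ[k] Module.End k (V ⊗[k] W) :=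
  Module.endTensorEndAlgHom.comp
    (Algebra.TensorProduct.map (Algebra.lsmul k k V) (Algebra.lsmul k k W))

variable {k V W}

theorem tensorAction_tmul (t : A ⊗[k] B) (v : V) (w : W) :
    tensorAction k V W t (v ⊗ₜ w) =
      TensorProduct.map ((LinearMap.toSpanSingleton A V v).restrictScalars k)
        ((LinearMap.toSpanSingleton B W w).restrictScalars k) t := by
  induction t with
  | zero => simp
  | tmul a b => rfl
  | add s t hs ht => simp only [map_add, LinearMap.add_apply, hs, ht]

theorem tensorAction_quotient_tmul (I : Ideal A) (J : Ideal B) (t : A ⊗[k] B) :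
    tensorAction k (A ⧸ I) (B ⧸ J) t (I.mkQ 1 ⊗ₜ J.mkQ 1) =
      TensorProduct.map (I.restrictScalars k).mkQ (J.restrictScalars k).mkQ t := by
  have hI : (LinearMap.toSpanSingleton A (A ⧸ I) (I.mkQ 1)).restrictScalars k =
      (I.restrictScalars k).mkQ :=
    LinearMap.ext fun a ↦ congrArg I.mkQ (mul_one a)
  have hJ : (LinearMap.toSpanSingleton B (B ⧸ J) (J.mkQ 1)).restrictScalars k =
      (J.restrictScalars k).mkQ :=
    LinearMap.ext fun b ↦ congrArg J.mkQ (mul_one b)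
  rw [tensorAction_tmul, hI, hJ]
  rfl

theorem tensorAction_eq_zero_of_map_mkQ {I : Ideal A} {J : Ideal B}
    (hV : ∀ a ∈ I, ∀ v : V, a • v = 0) (hW : ∀ b ∈ J, ∀ w : W, b • w = 0) {t : A ⊗[k] B}
    (ht : TensorProduct.map (I.restrictScalars k).mkQ (J.restrictScalars k).mkQ t = 0) :
    tensorAction k V W t = 0 := by
  refine TensorProduct.ext' fun v w ↦ ?_
  have hv : I.restrictScalars k ≤
      LinearMap.ker ((LinearMap.toSpanSingleton A V v).restrictScalars k) :=
    fun a ha ↦ hV a ha v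
  have hw : J.restrictScalars k ≤
      LinearMap.ker ((LinearMap.toSpanSingleton B W w).restrictScalars k) :=
    fun b hb ↦ hW b hb w
  rw [tensorAction_tmul, ← Submodule.liftQ_mkQ _ _ hv, ← Submodule.liftQ_mkQ _ _ hw,
    TensorProduct.map_comp, LinearMap.comp_apply, ht, map_zero, LinearMap.zero_apply]

section Naturality

variable {V' : Type*} [AddCommGroup V'] [Module k V'] [Module A V'] [IsScalarTower k A V']
  {W' : Type*} [AddCommGroup W'] [Module k W'] [Module B W'] [IsScalarTower k B W']

theorem tensorAction_map_tmul (f : V →ₗ[A] V') (g : W →ₗ[B] W') (t : A ⊗[k] B) (v : V) (w : W) :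
    tensorAction k V' W' t (f v ⊗ₜ g w) =
      TensorProduct.map (f.restrictScalars k) (g.restrictScalars k)
        (tensorAction k V W t (v ⊗ₜ w)) := by
  simp only [tensorAction_tmul, ← LinearMap.comp_toSpanSingleton, ← LinearMap.comp_apply,
    ← TensorProduct.map_comp]
  rfl

theorem tensorAction_eq_zero_of_linearEquiv (e : V ≃ₗ[A] V') (f : W ≃ₗ[B] W') {t : A ⊗[k] B}
    (h : tensorAction k V W t = 0) : tensorAction k V' W' t = 0 := by
  refine TensorProduct.ext' fun v w ↦ ?_
  simpa [h] using
    tensorAction_map_tmul (e : V →ₗ[A] V') (f : W →ₗ[B] W') t (e.symm v) (f.symm w)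

end Naturality

theorem tensorAction_eq_zero_of_forall_simple [IsSemisimpleModule A V] [IsSemisimpleModule B W]
    {t : A ⊗[k] B} (h : ∀ (S : Submodule A V) (T : Submodule B W), IsSimpleModule A S →
      IsSimpleModule B T → tensorAction k S T t = 0) :
    tensorAction k V W t = 0 := by
  suffices ∀ (v : V) (w : W), tensorAction k V W t (v ⊗ₜ w) = 0 from TensorProduct.ext' this
  intro v w
  induction v using isSemisimpleModule_induction (R := A) (M := V) with
  | zero => rw [TensorProduct.zero_tmul, map_zero]
  | add v v' hv hv' => rw [TensorProduct.add_tmul, map_add, hv, hv', add_zero]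
  | simple S hS v hv =>
    induction w using isSemisimpleModule_induction (R := B) (M := W) with
    | zero => rw [TensorProduct.tmul_zero, map_zero]
    | add w w' hw hw' => rw [TensorProduct.tmul_add, map_add, hw, hw', add_zero]
    | simple T hT w hw =>
      simpa [h S T hS hT] using
        tensorAction_map_tmul (k := k) S.subtype T.subtype t ⟨v, hv⟩ ⟨w, hw⟩

end TensorAction

section Chevalley

variable (k A : Type*) [CommRing k] [Ring A] [Bialgebra k A]

/-- The module structure over a bialgebra `A` on the tensor product of two `A`-modules, where `a`
acts as `Δ(a)`. -/
noncomputable abbrev comulModule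
    (V : Type*) [AddCommGroup V] [Module k V] [Module A V] [IsScalarTower k A V]
    (W : Type*) [AddCommGroup W] [Module k W] [Module A W] [IsScalarTower k A W] :
    Module A (V ⊗[k] W) :=
  Module.compHom _ ((tensorAction k V W).comp (Bialgebra.comulAlgHom k A)).toRingHom

/-- The Chevalley property of a bialgebra: the tensor product of two simple modules, here in the
universes `v` and `w`, is semisimple. -/
def HasChevalleyProperty : Prop :=
  ∀ (V : Type v) (W : Type w)
    [AddCommGroup V] [Module k V] [Module A V] [IsScalarTower k A V]
    [AddCommGroup W] [Module k W] [Module A W] [IsScalarTower k A W],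
    IsSimpleModule A V → IsSimpleModule A W →
      letI := comulModule k A V W
      IsSemisimpleModule A (V ⊗[k] W)

variable {k A}

section Modules

variable {V : Type*} [AddCommGroup V] [Module k V] [Module A V] [IsScalarTower k A V]
  {W : Type*} [AddCommGroup W] [Module k W] [Module A W] [IsScalarTower k A W]
  [IsSemiprimaryRing A]

theorem isSemisimpleModule_comulModule_iff :
    letI := comulModule k A V W
    IsSemisimpleModule A (V ⊗[k] W) ↔
      ∀ a ∈ Ring.jacobson A, tensorAction k V W (Coalgebra.comul a) = 0 := by
  let := comulModule k A V W
  rw [isSemisimpleModule_iff_jacobson_smul_eq_zero]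
  exact forall₂_congr fun a _ ↦
    (LinearMap.ext_iff (f := tensorAction k V W (Coalgebra.comul a)) (g := 0)).symm

theorem HasChevalleyProperty.tensorAction_comul_eq_zero (h : HasChevalleyProperty.{v, w} k A)
    [Small.{v} V] [Small.{w} W] [IsSimpleModule A V] [IsSimpleModule A W] {a : A}
    (ha : a ∈ Ring.jacobson A) : tensorAction k V W (Coalgebra.comul a) = 0 := by
  let eV := Shrink.linearEquiv.{v} A V
  let eW := Shrink.linearEquiv.{w} A W
  have : IsScalarTower k A (Shrink.{v} V) := eV.toEquiv.isScalarTower k A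
  have : IsScalarTower k A (Shrink.{w} W) := eW.toEquiv.isScalarTower k A
  have hV := IsSimpleModule.congr eV
  have hW := IsSimpleModule.congr eW
  exact tensorAction_eq_zero_of_linearEquiv eV eW
    (isSemisimpleModule_comulModule_iff.1 (h _ _ hV hW) a ha)

end Modules

theorem hasChevalleyProperty_iff_map_mkQ_comul_eq_zero [IsSemiprimaryRing A] [Small.{v} A]
    [Small.{w} A] :
    HasChevalleyProperty.{v, w} k A ↔ ∀ a ∈ Ring.jacobson A,
      TensorProduct.map ((Ring.jacobson A).restrictScalars k).mkQ
        ((Ring.jacobson A).restrictScalars k).mkQ (Coalgebra.comul a) = 0 := by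
  constructor
  · intro h a ha
    let Q := A ⧸ Ring.jacobson A
    have : IsSemisimpleModule A Q := isSemisimpleModule_quotient_jacobson
    have := small_of_surjective.{v} (Ring.jacobson A).mkQ_surjective
    have := small_of_surjective.{w} (Ring.jacobson A).mkQ_surjective
    have acts_as_zero : tensorAction k Q Q (Coalgebra.comul a) = 0 :=
      tensorAction_eq_zero_of_forall_simple fun S T _ _ ↦ h.tensorAction_comul_eq_zero ha
    rw [← tensorAction_quotient_tmul, acts_as_zero]
    rfl
  · intro h V W _ _ _ _ _ _ _ _ _ _
    exact isSemisimpleModule_comulModule_iff.2 fun a ha ↦ tensorAction_eq_zero_of_map_mkQ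
      (isSemisimpleModule_iff_jacobson_smul_eq_zero.1 inferInstance)
      (isSemisimpleModule_iff_jacobson_smul_eq_zero.1 inferInstance) (h a ha)

theorem counit_eq_zero_of_mem_jacobson [IsSemisimpleRing k] {a : A} (ha : a ∈ Ring.jacobson A) :
    Coalgebra.counit (R := k) a = 0 := by
  have : RingHomSurjective (Bialgebra.counitAlgHom k A : A →+* k) :=
    ⟨fun r ↦ ⟨algebraMap k A r, by simp⟩⟩
  simpa [IsSemisimpleRing.jacobson_eq_bot] using
    Ring.le_comap_jacobson (Bialgebra.counitAlgHom k A : A →+* k) ha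

end Chevalley

theorem chevalley_iff_rad_isHopfIdeal_general (k A : Type*) [CommRing k] [IsSemisimpleRing k]
    [Small.{v} k] [Small.{w} k] [Ring A] [HopfAlgebra k A] [Module.Finite k A] :
    HasChevalleyProperty.{v, w} k A ↔ (rad A).IsHopfIdeal k := by
  have := IsArtinianRing.of_finite k A
  have := Module.Finite.small.{v} k A
  have := Module.Finite.small.{w} k A
  rw [rad, Ideal.jacobson_bot, hasChevalleyProperty_iff_map_mkQ_comul_eq_zero]
  refine ⟨fun h ↦ ?_, fun h a ha ↦ h.map_mkQ_comul_eq_zero ha⟩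
  have : ((Ring.jacobson A).restrictScalars k).IsCoideal :=
    ⟨fun _ ↦ counit_eq_zero_of_mem_jacobson, h⟩
  exact isHopfIdeal_of_isCoideal _

/-- Proposition 7.2.2: a finite-dimensional Hopf algebra over `ℂ` has the
Chevalley property (the tensor product of any two simple modules is semisimple) if and only if
its Jacobson radical is a Hopf ideal. -/
theorem chevalley_iff_rad_isHopfIdeal
    (A : Type*) [Ring A] [HopfAlgebra ℂ A] [FiniteDimensional ℂ A] :
    (∀ (V W : Type*)
        [AddCommGroup V] [Module ℂ V] [Module A V] [IsScalarTower ℂ A V] [SMulCommClass ℂ A V]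
        [AddCommGroup W] [Module ℂ W] [Module A W] [IsScalarTower ℂ A W] [SMulCommClass ℂ A W],
        IsSimpleModule A V → IsSimpleModule A W →
        letI := tensorRepModule A V W
        IsSemisimpleModule A (V ⊗[ℂ] W))
    ↔ ((∀ a ∈ rad A, Coalgebra.counit (R := ℂ) a = 0) ∧
       (∀ a ∈ rad A, Coalgebra.comul (R := ℂ) a ∈
          LinearMap.range (TensorProduct.map ((rad A).restrictScalars ℂ).subtype
            (LinearMap.id : A →ₗ[ℂ] A)) ⊔
          LinearMap.range (TensorProduct.map (LinearMap.id : A →ₗ[ℂ] A)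
            ((rad A).restrictScalars ℂ).subtype)) ∧
       (∀ a ∈ rad A, HopfAlgebra.antipode (R := ℂ) a ∈ rad A)) := by
  refine Iff.trans (b := HasChevalleyProperty ℂ A)
    ⟨fun h V W _ _ _ _ _ _ _ _ ↦ h V W, fun h V W _ _ _ _ _ _ _ _ _ _ ↦ h V W⟩ ?_
  rw [chevalley_iff_rad_isHopfIdeal_general, Ideal.isHopfIdeal_iff,
    Submodule.isCoideal_iff_comul_mem, and_assoc]
  simp_rw [sup_comm (LinearMap.range (LinearMap.lTensor _ _))]
  rfl
end

section
/- Let d ∈ ℂ be an algebraic integer such that for every positive integer k, both d(d+1)⋯(d+k−1)/k! and d(d−1)⋯(d−k+1)/k! are algebraic integers. Then d is a rational integer, i.e. d ∈ ℤ. -/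
/-!
Let `aₖ` be the product of the two binomial quotients of order `k`, so that
`aₖ = ∏_{i < k} (d² - i²) / (i + 1)²` is a rational polynomial in `d`. Under each embedding of
`ℚ(d)` into `ℂ` the `k`-th factor has absolute value at most `k / (k + 1)` once `k ≥ |d|²`, so
`aₖ → 0` like `1 / k`, for all conjugates of `d` simultaneously. A nonzero algebraic integer has a
conjugate of absolute value at least `1`, hence `aₖ = 0` for some `k`, which means `d² = i²` for
some `i < k`.
-/

open Filter Finset
open scoped Topology IntermediateField Nat Polynomial

theorem tendsto_zero_of_eventually_succ_mul_norm_le {E : Type*} [SeminormedAddGroup E] {u : ℕ → E}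
    (h : ∀ᶠ k : ℕ in atTop, ((k + 1 : ℕ) : ℝ) * ‖u (k + 1)‖ ≤ k * ‖u k‖) :
    Tendsto u atTop (𝓝 0) := by
  obtain ⟨m, hm⟩ := eventually_atTop.1 h
  have hanti : AntitoneOn (fun k : ℕ => (k : ℝ) * ‖u k‖) (Set.Ici m) :=
    antitoneOn_nat_Ici_of_succ_le hm
  refine squeeze_zero_norm' ?_ (tendsto_const_div_atTop_nhds_zero_nat (m * ‖u m‖))
  filter_upwards [eventually_ge_atTop m, eventually_gt_atTop 0] with k hmk hk
  rw [le_div_iff₀' (Nat.cast_pos.2 hk)]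
  exact hanti Set.self_mem_Ici hmk hmk

/-- The product of the rising and the falling binomial quotient of order `k` at `z` (see
`binomialProd_eq_mul`), with the factors paired as `(z + i) * (z - i) = z ^ 2 - i ^ 2`. -/
def binomialProd {F : Type*} [Field F] (z : F) (k : ℕ) : F :=
  ∏ i ∈ range k, (z ^ 2 - (i : F) ^ 2) / ((i : F) + 1) ^ 2

section Field

variable {F : Type*} [Field F]

theorem binomialProd_succ (z : F) (k : ℕ) :
    binomialProd z (k + 1) = binomialProd z k * ((z ^ 2 - (k : F) ^ 2) / ((k : F) + 1) ^ 2) :=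
  prod_range_succ _ _

theorem map_binomialProd {F' : Type*} [Field F'] (f : F →+* F') (z : F) (k : ℕ) :
    f (binomialProd z k) = binomialProd (f z) k := by
  simp [binomialProd]

theorem binomialProd_eq_div (z : F) (k : ℕ) :
    binomialProd z k = (∏ i ∈ range k, (z ^ 2 - (i : F) ^ 2)) / (k ! : F) ^ 2 := by
  rw [binomialProd, prod_div_distrib, prod_pow, ← prod_range_add_one_eq_factorial]
  push_cast
  rfl

theorem binomialProd_eq_mul (z : F) (k : ℕ) :
    binomialProd z k =
      (∏ i ∈ range k, (z + (i : F))) / (k ! : F) *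
        ((∏ i ∈ range k, (z - (i : F))) / (k ! : F)) := by
  simp only [binomialProd_eq_div, sq_sub_sq, prod_mul_distrib, div_mul_div_comm, ← sq]

variable [CharZero F]

theorem exists_eq_intCast_of_binomialProd_eq_zero {z : F} {k : ℕ} (h : binomialProd z k = 0) :
    ∃ n : ℤ, z = n := by
  obtain ⟨i, -, hi⟩ := prod_eq_zero_iff.1 h
  have hsq : z ^ 2 = (i : F) ^ 2 :=
    sub_eq_zero.1 ((div_eq_zero_iff.1 hi).resolve_right (pow_ne_zero 2 i.cast_add_one_ne_zero))
  obtain hz | hz := sq_eq_sq_iff_eq_or_eq_neg.1 hsq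
  · exact ⟨i, by simpa using hz⟩
  · exact ⟨-i, by simpa using hz⟩

theorem isIntegral_of_isIntegral_binomialProd {z : F} {k : ℕ} (hk : k ≠ 0)
    (h : IsIntegral ℤ (binomialProd z k)) : IsIntegral ℤ z := by
  let p (i : ℕ) : ℤ[X] := .X ^ 2 - .C ((i : ℤ) ^ 2)
  have hmonic : ∀ i ∈ range k, (p i).Monic := fun i _ =>
    Polynomial.monic_X_pow_sub_C _ two_ne_zero
  have hdeg : (∏ i ∈ range k, p i).natDegree = k * 2 := by
    simp only [Polynomial.natDegree_prod_of_monic _ _ hmonic, p, Polynomial.natDegree_X_pow_sub_C,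
      sum_const, card_range, smul_eq_mul]
  have hfac : (k ! : F) ^ 2 ≠ 0 := pow_ne_zero 2 (Nat.cast_ne_zero.2 k.factorial_ne_zero)
  have heval : (∏ i ∈ range k, p i).aeval z = binomialProd z k * (k ! : F) ^ 2 := by
    rw [binomialProd_eq_div, div_mul_cancel₀ _ hfac]
    simp [p]
  refine .of_aeval_monic (Polynomial.monic_prod_of_monic _ _ hmonic) (by omega) ?_
  rw [heval]
  exact h.mul ((isIntegral_natCast (k !)).pow 2)

end Field

theorem tendsto_binomialProd_zero {𝕜 : Type*} [NormedField 𝕜] [NormSMulClass ℤ 𝕜] (z : 𝕜) :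
    Tendsto (binomialProd z) atTop (𝓝 0) := by
  refine tendsto_zero_of_eventually_succ_mul_norm_le ?_
  filter_upwards [tendsto_natCast_atTop_atTop.eventually_ge_atTop (‖z‖ ^ 2)] with k hk
  have hnum : ‖z ^ 2 - (k : 𝕜) ^ 2‖ ≤ k * (k + 1) :=
    calc ‖z ^ 2 - (k : 𝕜) ^ 2‖ ≤ ‖z ^ 2‖ + ‖(k : 𝕜) ^ 2‖ := norm_sub_le _ _
      _ = ‖z‖ ^ 2 + (k : ℝ) ^ 2 := by rw [norm_pow, norm_pow, norm_natCast]
      _ ≤ k + (k : ℝ) ^ 2 := by gcongr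
      _ = k * (k + 1) := by ring
  have hden : ‖(k : 𝕜) + 1‖ = k + 1 := by exact_mod_cast norm_natCast (α := 𝕜) (k + 1)
  rw [binomialProd_succ, norm_mul, norm_div, norm_pow, hden, Nat.cast_succ]
  calc ((k : ℝ) + 1) * (‖binomialProd z k‖ * (‖z ^ 2 - (k : 𝕜) ^ 2‖ / (k + 1) ^ 2))
      ≤ (k + 1) * (‖binomialProd z k‖ * (k * (k + 1) / (k + 1) ^ 2)) := by gcongr
    _ = k * ‖binomialProd z k‖ := by field_simp

section NumberField

variable {K : Type*} [Field K] [NumberField K]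

theorem eq_zero_of_isIntegral_of_norm_embedding_lt_one {x : K} (hx : IsIntegral ℤ x)
    (h : ∀ σ : K →+* ℂ, ‖σ x‖ < 1) : x = 0 := by
  by_contra hx0
  obtain ⟨σ, hσ⟩ := NumberField.exists_conjugate_one_le_norm (α := ⟨x, hx⟩)
    fun h0 => hx0 (congrArg Subtype.val h0)
  exact (h σ).not_ge hσ

theorem eventually_eq_zero_of_isIntegral_of_tendsto_embedding {ι : Type*} {l : Filter ι}
    {x : ι → K} (h : ∀ σ : K →+* ℂ, Tendsto (fun i => σ (x i)) l (𝓝 0)) :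
    ∀ᶠ i in l, IsIntegral ℤ (x i) → x i = 0 := by
  have hsmall (σ : K →+* ℂ) : ∀ᶠ i in l, ‖σ (x i)‖ < 1 :=
    (h σ).norm.eventually_lt_const (norm_zero.trans_lt one_pos)
  filter_upwards [eventually_all.2 hsmall] with i hi hint
  exact eq_zero_of_isIntegral_of_norm_embedding_lt_one hint hi

theorem exists_eq_intCast_of_frequently_isIntegral_binomialProd {x : K}
    (h : ∃ᶠ k in atTop, IsIntegral ℤ (binomialProd x k)) : ∃ n : ℤ, x = n := by
  have hzero : ∀ᶠ k in atTop, IsIntegral ℤ (binomialProd x k) → binomialProd x k = 0 :=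
    eventually_eq_zero_of_isIntegral_of_tendsto_embedding fun σ => by
      simpa only [map_binomialProd] using tendsto_binomialProd_zero (σ x)
  obtain ⟨k, hk⟩ := (h.mp hzero).exists
  exact exists_eq_intCast_of_binomialProd_eq_zero hk

end NumberField

theorem isInt_of_binomials_isIntegral_general {F : Type*} [Field F] [CharZero F] (d : F)
    (h : ∃ᶠ k : ℕ in atTop, IsIntegral ℤ
      ((∏ i ∈ range k, (d + (i : F))) / (k ! : F) *
        ((∏ i ∈ range k, (d - (i : F))) / (k ! : F)))) :
    ∃ n : ℤ, d = n := by
  simp only [← binomialProd_eq_mul] at h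
  obtain ⟨k, hint, hk⟩ := (h.and_eventually (eventually_ne_atTop 0)).exists
  have hd : IsIntegral ℤ d := isIntegral_of_isIntegral_binomialProd hk hint
  have : FiniteDimensional ℚ ℚ⟮d⟯ := IntermediateField.adjoin.finiteDimensional hd.tower_top
  have : NumberField ℚ⟮d⟯ := { }
  let α : ℚ⟮d⟯ := IntermediateField.AdjoinSimple.gen ℚ d
  have hα : algebraMap ℚ⟮d⟯ F α = d := IntermediateField.AdjoinSimple.algebraMap_gen ℚ d
  have hfreq : ∃ᶠ k in atTop, IsIntegral ℤ (binomialProd α k) := h.mono fun k hk => by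
    rwa [← isIntegral_algebraMap_iff (algebraMap ℚ⟮d⟯ F).injective, map_binomialProd, hα]
  obtain ⟨n, hn⟩ := exists_eq_intCast_of_frequently_isIntegral_binomialProd hfreq
  exact ⟨n, by rw [← hα, hn, map_intCast]⟩

/-- Lemma inside Theorem 7.4.5: an algebraic integer `d` such that
`d(d+1)⋯(d+k−1)/k!` and `d(d−1)⋯(d−k+1)/k!` are algebraic integers for all `k ≥ 1`
is a rational integer. -/
theorem isInt_of_binomials_isIntegral (d : ℂ) (hd : IsIntegral ℤ d)
    (hup : ∀ k : ℕ, 0 < k →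
      IsIntegral ℤ ((∏ i ∈ Finset.range k, (d + (i : ℂ))) / (Nat.factorial k : ℂ)))
    (hdown : ∀ k : ℕ, 0 < k →
      IsIntegral ℤ ((∏ i ∈ Finset.range k, (d - (i : ℂ))) / (Nat.factorial k : ℂ))) :
    ∃ n : ℤ, d = (n : ℂ) :=
  isInt_of_binomials_isIntegral_general d <|
    ((eventually_gt_atTop 0).mono fun k hk => (hup k hk).mul (hdown k hk)).frequently
end
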